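/- Fix α ∈ (0,∞) and n ∈ ℕ. Suppose θ is bounded, i.e. sup_{P∈P} |θ(P)| < ∞ (Condition A); the loss l : [0,∞) → [0,∞) is nondecreasing with l(0) = 0 and l(3t/2) ≤ a·l(t) for all t ≥ 0, for some a ∈ (1,∞) (Condition B); P is convex and dominated; and θ : P → ℝ is linear. Then the α-private minimax risk satisfies M_{n,α}(P, θ) ≤ C1 · l( ω_TV( (4/√n)·(e^α+1)/(e^α−1) ) ), where C1 = [1 + 8a²/(2a−1)] · a^{⌈2 log(C)/log(3/2)⌉ + 1} with C = √(2 log(2a)) + 1. -/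

import Mathlib

open MeasureTheory ProbabilityTheory ENNReal

namespace PrivacyPaper

variable {X Z Ω : Type*} [MeasurableSpace X] [MeasurableSpace Z] [MeasurableSpace Ω]

/-- Total variation distance between two measures:
`d_TV(P0, P1) = sup_{A measurable} |P0(A) - P1(A)|`. -/
noncomputable def dTV (P0 P1 : Measure Ω) : ℝ :=
  ⨆ A : {A : Set Ω // MeasurableSet A}, |(P0 A.1).toReal - (P1 A.1).toReal|

/-- Hellinger distance between two measures, computed via densities with respect to the
dominating measure `P0 + P1`. -/
noncomputable def dH (P0 P1 : Measure Ω) : ℝ :=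
  Real.sqrt (∫ ω, (Real.sqrt ((P0.rnDeriv (P0 + P1) ω).toReal) -
    Real.sqrt ((P1.rnDeriv (P0 + P1) ω).toReal)) ^ 2 ∂(P0 + P1))

/-- Hellinger affinity `ρ(P0, P1) = ∫ √(p0 p1) dμ`, with `μ = P0 + P1`. -/
noncomputable def hellingerAffinity (P0 P1 : Measure Ω) : ℝ :=
  ∫ ω, Real.sqrt ((P0.rnDeriv (P0 + P1) ω).toReal * (P1.rnDeriv (P0 + P1) ω).toReal)
    ∂(P0 + P1)

/-- Modulus of continuity of a functional `θ` over `P` with respect to a distance `d`,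
with values in `ℝ≥0∞`. -/
noncomputable def modulus (d : Measure X → Measure X → ℝ) (P : Set (Measure X))
    (θ : Measure X → ℝ) (ε : ℝ) : ℝ≥0∞ :=
  ⨆ (P0 : Measure X) (_ : P0 ∈ P) (P1 : Measure X) (_ : P1 ∈ P) (_ : d P0 P1 ≤ ε),
    ENNReal.ofReal |θ P0 - θ P1|

/-- Total variation modulus of continuity `ω_TV`. -/
noncomputable def omegaTV (P : Set (Measure X)) (θ : Measure X → ℝ) : ℝ → ℝ≥0∞ :=
  modulus dTV P θ

/-- Hellinger modulus of continuity `ω_H`. -/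
noncomputable def omegaH (P : Set (Measure X)) (θ : Measure X → ℝ) : ℝ → ℝ≥0∞ :=
  modulus dH P θ

/-- Push-forward of a measure through a channel `c` (given as a map into measures):
`(c P)(A) = ∫ c(A|x) dP(x)`. -/
noncomputable def push (c : X → Measure Z) (μ : Measure X) : Measure Z := μ.bind c

/-- Privatized Hellinger modulus `ω_H^{(Q1)}`. -/
noncomputable def omegaHQ (c : X → Measure Z) (P : Set (Measure X)) (θ : Measure X → ℝ) :
    ℝ → ℝ≥0∞ :=
  modulus (fun P0 P1 => dH (push c P0) (push c P1)) P θ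

/-- Left limit at `m ∈ ℝ≥0∞` of a nondecreasing `ℝ≥0∞`-valued function on `[0,∞)`:
`f(m⁻) = sup_{0 ≤ y < m} f(y)`. -/
noncomputable def leftLimE (f : ℝ → ℝ≥0∞) (m : ℝ≥0∞) : ℝ≥0∞ :=
  ⨆ (y : ℝ) (_ : 0 ≤ y) (_ : ENNReal.ofReal y < m), f y

/-- Right limit at `x ∈ ℝ` of a nondecreasing `ℝ≥0∞`-valued function:
`f(x⁺) = inf_{y > x} f(y)`. -/
noncomputable def rightLimE (f : ℝ → ℝ≥0∞) (x : ℝ) : ℝ≥0∞ :=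
  ⨅ (y : ℝ) (_ : x < y), f y

/-- Left limit of a nondecreasing loss function at `m ∈ ℝ≥0∞`, with the convention
`l(0⁻) = l(0)`, as an element of `ℝ≥0∞`. -/
noncomputable def lossLeftLim (l : ℝ → ℝ) (m : ℝ≥0∞) : ℝ≥0∞ :=
  if m = 0 then ENNReal.ofReal (l 0)
  else ⨆ (y : ℝ) (_ : 0 ≤ y) (_ : ENNReal.ofReal y < m), ENNReal.ofReal (l y)

/-- A (randomized) test is a measurable function with values in `[0,1]`. -/
def IsTest (φ : Ω → ℝ) : Prop := Measurable φ ∧ ∀ ω, 0 ≤ φ ω ∧ φ ω ≤ 1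

/-- Risk of a test: `∫ φ dμ0 + ∫ (1 - φ) dμ1`. -/
noncomputable def testRisk (μ0 μ1 : Measure Ω) (φ : Ω → ℝ) : ℝ :=
  (∫ ω, φ ω ∂μ0) + ∫ ω, (1 - φ ω) ∂μ1

/-- Testing affinity of a pair of measures: `π(μ0, μ1) = inf_φ (∫ φ dμ0 + ∫ (1-φ) dμ1)`. -/
noncomputable def pairAffinity (μ0 μ1 : Measure Ω) : ℝ :=
  sInf {r : ℝ | ∃ φ : Ω → ℝ, IsTest φ ∧ r = testRisk μ0 μ1 φ}

/-- Testing affinity of two sets of measures: `π(M0, M1) = sup π(μ0, μ1)`. -/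
noncomputable def setAffinity (M0 M1 : Set (Measure Ω)) : ℝ :=
  sSup {r : ℝ | ∃ μ0 ∈ M0, ∃ μ1 ∈ M1, r = pairAffinity μ0 μ1}

/-- The set of finite convex combinations of elements of `M`. -/
def convComb (M : Set (Measure Ω)) : Set (Measure Ω) :=
  {μ | ∃ (m : ℕ) (w : Fin m → ℝ≥0∞) (ν : Fin m → Measure Ω),
    (∑ i, w i) = 1 ∧ (∀ i, ν i ∈ M) ∧ μ = ∑ i, w i • ν i}

/-- The upper affinity `η_A^{(n)}(Q, Δ)`, for the channel described through the map
`QPn : P ↦ Q P^{⊗n}`. -/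
noncomputable def etaA {Zn : Type*} [MeasurableSpace Zn] (QPn : Measure X → Measure Zn)
    (P : Set (Measure X)) (θ : Measure X → ℝ) (Δ : ℝ) : ℝ :=
  ⨆ t : ℝ, setAffinity (convComb (QPn '' {μ | μ ∈ P ∧ θ μ ≤ t}))
    (convComb (QPn '' {μ | μ ∈ P ∧ t + Δ ≤ θ μ}))

/-- The affinity `η_2^{(n)}(Q, Δ)` (no convex hulls). -/
noncomputable def eta2 {Zn : Type*} [MeasurableSpace Zn] (QPn : Measure X → Measure Zn)
    (P : Set (Measure X)) (θ : Measure X → ℝ) (Δ : ℝ) : ℝ :=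
  ⨆ t : ℝ, setAffinity (QPn '' {μ | μ ∈ P ∧ θ μ ≤ t}) (QPn '' {μ | μ ∈ P ∧ t + Δ ≤ θ μ})

/-- `Δ_A^{(n)}(Q, η) = sup {Δ ≥ 0 : η_A^{(n)}(Q, Δ) > η}`, as an element of `ℝ≥0∞`. -/
noncomputable def DeltaA {Zn : Type*} [MeasurableSpace Zn] (QPn : Measure X → Measure Zn)
    (P : Set (Measure X)) (θ : Measure X → ℝ) (η : ℝ) : ℝ≥0∞ :=
  ⨆ (Δ : ℝ) (_ : 0 ≤ Δ) (_ : η < etaA QPn P θ Δ), ENNReal.ofReal Δ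

/-- `Δ_2^{(n)}(Q, η) = sup {Δ ≥ 0 : η_2^{(n)}(Q, Δ) > η}`, as an element of `ℝ≥0∞`. -/
noncomputable def Delta2 {Zn : Type*} [MeasurableSpace Zn] (QPn : Measure X → Measure Zn)
    (P : Set (Measure X)) (θ : Measure X → ℝ) (η : ℝ) : ℝ≥0∞ :=
  ⨆ (Δ : ℝ) (_ : 0 ≤ Δ) (_ : η < eta2 QPn P θ Δ), ENNReal.ofReal Δ

/-- The privatized distribution `Q P^{⊗n}` of the observation vector. -/
noncomputable def privProd {Zn : Type*} [MeasurableSpace Zn] (n : ℕ)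
    (Q : (Fin n → X) → Measure Zn) (μ : Measure X) : Measure Zn :=
  (Measure.pi fun _ : Fin n => μ).bind Q

/-- The `Q`-privatized minimax risk `M_n(Q, P, θ)` (with values in `ℝ≥0∞`), where the channel
is described through the map `QPn : P ↦ Q P^{⊗n}`. -/
noncomputable def minimaxRisk {Zn : Type*} [MeasurableSpace Zn] (l : ℝ → ℝ)
    (QPn : Measure X → Measure Zn) (P : Set (Measure X)) (θ : Measure X → ℝ) : ℝ≥0∞ :=
  ⨅ (est : Zn → ℝ) (_ : Measurable est), ⨆ (μ : Measure X) (_ : μ ∈ P),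
    ∫⁻ z, ENNReal.ofReal (l |est z - θ μ|) ∂(QPn μ)

/-- Iterated sequential integral: `seqIntegral K n x g` is
`∫ ⋯ ∫ g(z_1,…,z_n) K_{n-1}(dz_n | x_n, z_{1:n-1}) ⋯ K_0(dz_1 | x_1)`. -/
noncomputable def seqIntegral (K : (i : ℕ) → X × (Fin i → Z) → Measure Z) :
    (n : ℕ) → (Fin n → X) → ((Fin n → Z) → ℝ≥0∞) → ℝ≥0∞
  | 0, _, g => g fun i => i.elim0
  | n + 1, x, g => seqIntegral K n (fun i => x i.castSucc)
      fun zpre => ∫⁻ zn, g (Fin.snoc zpre zn) ∂(K n (x (Fin.last n), zpre))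

/-- An `α`-sequentially interactive channel: `Q` is obtained by sequential composition of
Markov kernels `K i : X × Z^i → Z`, each of which satisfies the `α`-differential privacy
ratio bound in its `X`-argument. -/
def IsSeqInteractive (n : ℕ) (α : ℝ) (Q : Kernel (Fin n → X) (Fin n → Z)) : Prop :=
  ∃ K : (i : ℕ) → Kernel (X × (Fin i → Z)) Z,
    (∀ i, IsMarkovKernel (K i)) ∧
    (∀ (i : ℕ) (x x' : X) (zpre : Fin i → Z) (A : Set Z), MeasurableSet A →
      K i (x, zpre) A ≤ ENNReal.ofReal (Real.exp α) * K i (x', zpre) A) ∧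
    (∀ (x : Fin n → X) (A : Set (Fin n → Z)), MeasurableSet A →
      Q x A = seqIntegral (fun i p => K i p) n x (A.indicator fun _ => 1))

/-- The `α`-private minimax risk `M_{n,α}(P, θ)`: infimum over all output dimensions
`q ∈ ℕ` and all `α`-sequentially interactive channels from `X^n` to `(ℝ^q)^n`. -/
noncomputable def privMinimaxRisk (n : ℕ) (α : ℝ) (l : ℝ → ℝ) (P : Set (Measure X))
    (θ : Measure X → ℝ) : ℝ≥0∞ :=
  ⨅ (q : ℕ) (Q : Kernel (Fin n → X) (Fin n → (Fin q → ℝ))) (_ : IsMarkovKernel Q)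
    (_ : IsSeqInteractive n α Q),
      minimaxRisk l (privProd n fun x => Q x) P θ

/-- The mixture `λ P0 + (1-λ) P1` of two measures. -/
noncomputable def mix (lam : ℝ) (P0 P1 : Measure Ω) : Measure Ω :=
  ENNReal.ofReal lam • P0 + ENNReal.ofReal (1 - lam) • P1

/-- Convexity of a set of measures. -/
def ConvexMeasureSet (P : Set (Measure Ω)) : Prop :=
  ∀ P0 ∈ P, ∀ P1 ∈ P, ∀ lam : ℝ, 0 ≤ lam → lam ≤ 1 → mix lam P0 P1 ∈ P

/-- Linearity of a functional on a (convex) set of measures. -/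
def LinearFunctional (P : Set (Measure X)) (θ : Measure X → ℝ) : Prop :=
  ∀ P0 ∈ P, ∀ P1 ∈ P, ∀ lam : ℝ, 0 ≤ lam → lam ≤ 1 →
    θ (mix lam P0 P1) = lam * θ P0 + (1 - lam) * θ P1

/-- A family of measures is dominated if all its members are absolutely continuous with
respect to a single σ-finite measure. -/
def Dominated (M : Set (Measure Ω)) : Prop :=
  ∃ ν : Measure Ω, SigmaFinite ν ∧ ∀ μ ∈ M, μ ≪ ν

/-- Condition (A): the functional `θ` is bounded on `P`. -/
def CondA (P : Set (Measure X)) (θ : Measure X → ℝ) : Prop := ∃ c : ℝ, ∀ μ ∈ P, |θ μ| ≤ c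

/-- Condition (B): the loss `l : [0,∞) → [0,∞)` is nondecreasing, `l 0 = 0` and
`l(3t/2) ≤ a l(t)` for all `t ≥ 0`. -/
def CondB (l : ℝ → ℝ) (a : ℝ) : Prop :=
  (∀ u v : ℝ, 0 ≤ u → u ≤ v → l u ≤ l v) ∧ (∀ u : ℝ, 0 ≤ u → 0 ≤ l u) ∧ l 0 = 0 ∧
    ∀ u : ℝ, 0 ≤ u → l (3 / 2 * u) ≤ a * l u

/-- Sup-norm of a (bounded) function. -/
noncomputable def supNorm (f : X → ℝ) : ℝ := ⨆ x, |f x|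

/-- The binary privatization channel `Q_1^{(α,ℓ)}`, supported on `{-z0, z0}` with
`z0 = ‖ℓ‖_∞ (e^α + 1)/(e^α - 1)`, giving the point `z0` probability `(1 + ℓ(x)/z0)/2`. -/
noncomputable def binChannel (α : ℝ) (ℓ : X → ℝ) (x : X) : Measure ℝ :=
  ENNReal.ofReal ((1 + ℓ x / (supNorm ℓ * ((Real.exp α + 1) / (Real.exp α - 1)))) / 2) •
      Measure.dirac (supNorm ℓ * ((Real.exp α + 1) / (Real.exp α - 1))) +
    ENNReal.ofReal ((1 - ℓ x / (supNorm ℓ * ((Real.exp α + 1) / (Real.exp α - 1)))) / 2) •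
      Measure.dirac (-(supNorm ℓ * ((Real.exp α + 1) / (Real.exp α - 1))))

/-- `g_d(Q, η) = inf { d(P0, P1) : π(Q P0^{⊗n}, Q P1^{⊗n}) ≤ η }`, as an element of `ℝ≥0∞`
(with `inf ∅ = ∞`). -/
noncomputable def gDist {Zn : Type*} [MeasurableSpace Zn] (d : Measure X → Measure X → ℝ)
    (QPn : Measure X → Measure Zn) (P : Set (Measure X)) (η : ℝ) : ℝ≥0∞ :=
  ⨅ (P0 : Measure X) (_ : P0 ∈ P) (P1 : Measure X) (_ : P1 ∈ P)
    (_ : pairAffinity (QPn P0) (QPn P1) ≤ η), ENNReal.ofReal (d P0 P1)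

/-- Integral of a bounded measurable function against a finite signed measure, via the
Jordan decomposition. -/
noncomputable def sInt (φ : Ω → ℝ) (σ : MeasureTheory.SignedMeasure Ω) : ℝ :=
  (∫ ω, φ ω ∂σ.toJordanDecomposition.posPart) - ∫ ω, φ ω ∂σ.toJordanDecomposition.negPart

/-- Membership in the set `𝕋 = {φ ∈ L∞(μ) : a ≤ ∫ φ f dμ ≤ b  ∀ f ∈ L1(μ), ‖f‖_{L1} ≤ 1}`. -/
def memT (μ : Measure Ω) (a b : ℝ) (φ : Ω → ℝ) : Prop :=
  Measurable φ ∧ (∃ c : ℝ, ∀ᵐ ω ∂μ, |φ ω| ≤ c) ∧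
    ∀ f : Ω → ℝ, Integrable f μ → (∫ ω, |f ω| ∂μ) ≤ 1 →
      a ≤ (∫ ω, φ ω * f ω ∂μ) ∧ (∫ ω, φ ω * f ω ∂μ) ≤ b

/-- The function `G(s,t) = log((1-s)/(1-t)) / log((t/s)·(1-s)/(1-t))`, with `G(s,s) = s`. -/
noncomputable def Gfun (s t : ℝ) : ℝ :=
  if s = t then s
  else Real.log ((1 - s) / (1 - t)) / Real.log (t / s * ((1 - s) / (1 - t)))

/-!
Convexity of `P` and linearity of `θ` turn the definition of `W = ω_TV(ε)` into the affine bound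
`θ P0 - θ P1 ≤ W + (W / ε) d_TV(P0, P1)` on all of `P`. Separating, in `L¹ × ℝ`, the differences
of densities and of values of `θ` from a cone, and representing the resulting functional by the
duality of `L¹` and `L∞`, one finds `|h| ≤ 1` and `b` such that `b + (W / ε) ∫ h dP` is within
`W / 2` of `θ P` for every `P`. It remains to estimate the mean of `h` privately: each individual
answers `x` with a random sign of mean `r h(x)`, where `r = (e^α - 1) / (e^α + 1)`. For
`ε = 4 / (r √n)` the error is at most `(1/2 + T) W`, where `T` is the absolute value of a
sub-Gaussian variable whose parameter does not depend on `n`, while the loss at `(1/2 + T) W`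
exceeds `l(W)` by at most a constant times `e^T`.
-/

theorem exists_clm_neg_nonneg_of_disjoint_convexCone {E : Type*} [TopologicalSpace E]
    [AddCommGroup E] [IsTopologicalAddGroup E] [Module ℝ E] [ContinuousSMul ℝ E] {B : Set E}
    (hB : Convex ℝ B) (hBo : IsOpen B) {C : ConvexCone ℝ E} (hC : (C : Set E).Nonempty)
    (hBC : Disjoint B C) :
    ∃ f : E →L[ℝ] ℝ, (∀ x ∈ B, f x < 0) ∧ ∀ x ∈ C, 0 ≤ f x := by
  obtain ⟨f, u, hfB, hfC⟩ := geometric_hahn_banach_open hB hBo C.convex hBC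
  have hu {x} (hx : x ∈ C) {r : ℝ} (hr : 0 < r) : u ≤ r * f x := by
    simpa using hfC (r • x) (C.smul_mem hr hx)
  have hu_nonpos : u ≤ 0 := by
    obtain ⟨x, hx⟩ := hC
    by_contra! h
    have hfx : 0 < f x := h.trans_le (hfC x hx)
    have := hu hx (r := u / (2 * f x)) (by positivity)
    have : u / (2 * f x) * f x = u / 2 := by field_simp
    linarith
  refine ⟨f, fun x hx => (hfB x hx).trans_le hu_nonpos, fun x hx => ?_⟩
  by_contra! h
  have := hu hx (r := (u - 1) / f x) (div_pos_of_neg_of_neg (by linarith) h)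
  rw [div_mul_cancel₀ _ h.ne] at this
  linarith

theorem exists_clm_between_of_convex {V : Type*} [NormedAddCommGroup V] [NormedSpace ℝ V]
    {c : ℝ} (hc : 0 ≤ c) {S : Set (V × ℝ)} (hS : Convex ℝ S)
    (hSc : ∀ s ∈ S, s.2 ≤ c * ‖s.1‖) :
    ∃ F : V →L[ℝ] ℝ, (∀ v, F v ≤ c * ‖v‖) ∧ ∀ s ∈ S, s.2 ≤ F s.1 := by
  obtain rfl | hSne := S.eq_empty_or_nonempty
  · exact ⟨0, fun v => by simpa using mul_nonneg hc (norm_nonneg v), by simp⟩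
  have hconv : ConvexOn ℝ Set.univ fun v : V => c * ‖v‖ := by
    simpa only [smul_eq_mul] using convexOn_univ_norm.smul hc
  have hepi : Convex ℝ {p : V × ℝ | c * ‖p.1‖ < p.2} := by
    simpa only [Set.mem_univ, true_and] using hconv.convex_strict_epigraph
  have hepi_open : IsOpen {p : V × ℝ | c * ‖p.1‖ < p.2} :=
    isOpen_lt (by fun_prop) continuous_snd
  have hdisj : Disjoint {p : V × ℝ | c * ‖p.1‖ < p.2} (ConvexCone.hull ℝ S : Set (V × ℝ)) := by
    refine Set.disjoint_left.2 fun p hp hpS => ?_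
    obtain ⟨r, hr, s, hs, rfl⟩ := (ConvexCone.mem_hull_of_convex hS).1 hpS
    have : c * (r * ‖s.1‖) < r * s.2 := by simpa [norm_smul, abs_of_pos hr] using hp
    nlinarith [hSc s hs]
  obtain ⟨f, hf_neg, hf_nonneg⟩ := exists_clm_neg_nonneg_of_disjoint_convexCone hepi hepi_open
    (hSne.mono ConvexCone.subset_hull) hdisj
  have hf_apply (v : V) (r : ℝ) : f (v, r) = f (v, 0) + r * f (0, 1) := by
    rw [← smul_eq_mul, ← map_smul, ← map_add]
    simp
  have hslope : 0 < -f (0, 1) := neg_pos.2 (hf_neg (0, 1) (by simp))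
  refine ⟨(-f (0, 1))⁻¹ • f.comp (ContinuousLinearMap.inl ℝ V ℝ), fun v => ?_, fun s hs => ?_⟩
  · refine le_of_forall_gt_imp_ge_of_dense fun r hr => ?_
    have := hf_neg (v, r) hr
    rw [hf_apply] at this
    change (-f (0, 1))⁻¹ * f (v, 0) ≤ r
    rw [inv_mul_le_iff₀ hslope]
    linarith
  · have := hf_nonneg s (ConvexCone.subset_hull hs)
    rw [← Prod.mk.eta (p := s), hf_apply] at this
    change s.2 ≤ (-f (0, 1))⁻¹ * f (s.1, 0)
    rw [le_inv_mul_iff₀ hslope]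
    linarith

theorem clm_ext_of_indicatorConstLp {ν : Measure X} {p : ℝ≥0∞} [Fact (1 ≤ p)] (hp : p ≠ ∞)
    {F G : Lp ℝ p ν →L[ℝ] ℝ}
    (h : ∀ (s : Set X) (hs : MeasurableSet s) (hνs : ν s ≠ ∞),
      F (indicatorConstLp p hs hνs 1) = G (indicatorConstLp p hs hνs 1)) : F = G := by
  ext f
  induction f using Lp.induction hp with
  | indicatorConst c hs hνs =>
    have hsmul : indicatorConstLp p hs hνs.ne c = c • indicatorConstLp p hs hνs.ne (1 : ℝ) := by
      rw [indicatorConstLp, indicatorConstLp, ← MemLp.toLp_const_smul]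
      congr 1
      ext x
      simp [Set.indicator]
    rw [Lp.simpleFunc.coe_indicatorConst, hsmul, map_smul, map_smul, h _ hs hνs.ne]
  | add _ _ _ hf hg => rw [map_add, map_add, hf, hg]
  | isClosed => exact isClosed_eq F.continuous G.continuous

section L1Dual

variable {ν : Measure X} [IsFiniteMeasure ν]

theorem exists_lp_two_setIntegral_eq (F : Lp ℝ 1 ν →L[ℝ] ℝ) :
    ∃ g : Lp ℝ 2 ν, ∀ (s : Set X) (hs : MeasurableSet s),
      F (indicatorConstLp 1 hs (measure_ne_top ν s) 1) = ∫ x in s, g x ∂ν := by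
  let B := ContinuousLinearMap.mul ℝ ℝ
  let inclusion : Lp ℝ 2 ν →L[ℝ] Lp ℝ 1 ν := B.holderL ν 2 2 1 (Lp.const 2 ν 1)
  refine ⟨(InnerProductSpace.toDual ℝ (Lp ℝ 2 ν)).symm (F.comp inclusion), fun s hs => ?_⟩
  rw [← L2.inner_indicatorConstLp_one hs (measure_ne_top ν s), real_inner_comm,
    InnerProductSpace.toDual_symm_apply, ContinuousLinearMap.comp_apply]
  congr 1
  refine Lp.ext ?_
  filter_upwards [B.coeFn_holder (r := 1) (Lp.const 2 ν 1) (indicatorConstLp 2 hs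
    (measure_ne_top ν s) 1), Lp.coeFn_const (p := 2) (μ := ν) (c := (1 : ℝ)),
    indicatorConstLp_coeFn (p := 1) (hs := hs) (hμs := measure_ne_top ν s) (c := (1 : ℝ)),
    indicatorConstLp_coeFn (p := 2) (hs := hs) (hμs := measure_ne_top ν s) (c := (1 : ℝ))]
    with x hx h1 h2 h3
  change _ = B.holder 1 (Lp.const 2 ν 1) _ x
  rw [hx, h1, h2, h3]
  simp [B]

theorem ae_abs_le_of_setIntegral_eq {F : Lp ℝ 1 ν →L[ℝ] ℝ} {g : X → ℝ} (hg : Integrable g ν)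
    (hFg : ∀ (s : Set X) (hs : MeasurableSet s),
      F (indicatorConstLp 1 hs (measure_ne_top ν s) 1) = ∫ x in s, g x ∂ν) :
    ∀ᵐ x ∂ν, |g x| ≤ ‖F‖ := by
  have hF {s} (hs : MeasurableSet s) : |∫ x in s, g x ∂ν| ≤ ∫ _ in s, ‖F‖ ∂ν := by
    rw [← hFg s hs, setIntegral_const, smul_eq_mul, mul_comm]
    simpa [norm_indicatorConstLp] using F.le_opNorm (indicatorConstLp 1 hs (measure_ne_top ν s) 1)
  have upper : g ≤ᵐ[ν] fun _ => ‖F‖ :=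
    ae_le_of_forall_setIntegral_le hg (integrable_const _) fun s hs _ => (abs_le.1 (hF hs)).2
  have lower : (fun _ => -‖F‖) ≤ᵐ[ν] g :=
    ae_le_of_forall_setIntegral_le (integrable_const _) hg fun s hs _ => by
      simpa only [integral_neg] using (abs_le.1 (hF hs)).1
  filter_upwards [upper, lower] with x h₁ h₂ using abs_le.2 ⟨h₂, h₁⟩

theorem exists_measurable_bounded_eq_integral_mul (F : Lp ℝ 1 ν →L[ℝ] ℝ) :
    ∃ h : X → ℝ, Measurable h ∧ (∀ x, |h x| ≤ ‖F‖) ∧ ∀ f : Lp ℝ 1 ν, F f = ∫ x, h x * f x ∂ν := by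
  obtain ⟨g, hFg⟩ := exists_lp_two_setIntegral_eq F
  have hg_int : Integrable g ν := (Lp.memLp g).integrable one_le_two
  have hg_meas : Measurable g := (Lp.stronglyMeasurable g).measurable
  let h : X → ℝ := fun x => max (-‖F‖) (min ‖F‖ (g x))
  have hh_meas : Measurable h := by fun_prop
  have hh_le (x) : |h x| ≤ ‖F‖ :=
    abs_le.2 ⟨le_max_left _ _, max_le (by linarith [norm_nonneg F]) (min_le_left _ _)⟩
  have hgh : g =ᵐ[ν] h := by
    filter_upwards [ae_abs_le_of_setIntegral_eq hg_int hFg] with x hx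
    simp only [h, min_eq_right (abs_le.1 hx).2, max_eq_right (abs_le.1 hx).1]
  have hh_memLp : MemLp h ∞ ν :=
    memLp_top_of_bound hh_meas.aestronglyMeasurable ‖F‖ (ae_of_all _ hh_le)
  let G : Lp ℝ 1 ν →L[ℝ] ℝ := (ContinuousLinearMap.mul ℝ ℝ).lpPairing ν ∞ 1 hh_memLp.toLp
  have hG (f : Lp ℝ 1 ν) : G f = ∫ x, h x * f x ∂ν := by
    rw [ContinuousLinearMap.lpPairing_eq_integral]
    refine integral_congr_ae ?_
    filter_upwards [hh_memLp.coeFn_toLp] with x hx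
    simp [hx]
  suffices hFG : F = G from ⟨h, hh_meas, hh_le, fun f => by rw [hFG, hG]⟩
  refine clm_ext_of_indicatorConstLp one_ne_top fun s hs hνs => ?_
  rw [hFg, hG, ← integral_indicator hs]
  refine integral_congr_ae ?_
  filter_upwards [hgh, indicatorConstLp_coeFn (p := 1) (hs := hs) (hμs := hνs) (c := (1 : ℝ))]
    with x hx hxs
  by_cases hmem : x ∈ s <;> simp [hxs, hx, hmem]

end L1Dual

instance isFiniteMeasure_mix (lam : ℝ) (P0 P1 : Measure Ω) [IsFiniteMeasure P0]
    [IsFiniteMeasure P1] : IsFiniteMeasure (mix lam P0 P1) := by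
  have := P0.smul_finite (ofReal_ne_top (r := lam))
  have := P1.smul_finite (ofReal_ne_top (r := 1 - lam))
  unfold mix
  infer_instance

theorem measureReal_mix {lam : ℝ} (h0 : 0 ≤ lam) (h1 : lam ≤ 1) (P0 P1 : Measure Ω)
    [IsFiniteMeasure P0] [IsFiniteMeasure P1] (A : Set Ω) :
    (mix lam P0 P1).real A = lam * P0.real A + (1 - lam) * P1.real A := by
  simp only [mix, measureReal_def, Measure.add_apply, Measure.smul_apply, smul_eq_mul]
  rw [toReal_add (by finiteness) (by finiteness), toReal_mul, toReal_mul,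
    toReal_ofReal h0, toReal_ofReal (sub_nonneg.2 h1)]

theorem dTV_nonneg (P0 P1 : Measure Ω) : 0 ≤ dTV P0 P1 :=
  Real.iSup_nonneg fun _ => abs_nonneg _

theorem dTV_mix_left {lam : ℝ} (h0 : 0 ≤ lam) (h1 : lam ≤ 1) (P0 P1 : Measure Ω)
    [IsFiniteMeasure P0] [IsFiniteMeasure P1] :
    dTV (mix lam P0 P1) P1 = lam * dTV P0 P1 := by
  unfold dTV
  rw [Real.mul_iSup_of_nonneg h0]
  refine iSup_congr fun A => ?_
  have hA := measureReal_mix h0 h1 P0 P1 A.1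
  simp only [measureReal_def] at hA
  rw [hA, ← abs_of_nonneg h0, ← abs_mul, abs_of_nonneg h0]
  ring_nf

theorem omegaTV_ne_top {P : Set (Measure X)} {θ : Measure X → ℝ} (hA : CondA P θ) (ε : ℝ) :
    omegaTV P θ ε ≠ ∞ := by
  obtain ⟨c, hc⟩ := hA
  refine ne_top_of_le_ne_top (ofReal_ne_top (r := c + c)) ?_
  refine iSup₂_le fun P0 h0 => iSup₂_le fun P1 h1 => iSup_le fun _ => ofReal_le_ofReal ?_
  exact (abs_sub _ _).trans (add_le_add (hc P0 h0) (hc P1 h1))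

theorem abs_sub_le_toReal_omegaTV {P : Set (Measure X)} {θ : Measure X → ℝ} (hA : CondA P θ)
    {ε : ℝ} {P0 P1 : Measure X} (h0 : P0 ∈ P) (h1 : P1 ∈ P) (hd : dTV P0 P1 ≤ ε) :
    |θ P0 - θ P1| ≤ (omegaTV P θ ε).toReal := by
  rw [← ofReal_le_iff_le_toReal (omegaTV_ne_top hA ε)]
  exact le_iSup₂_of_le P0 h0 (le_iSup₂_of_le P1 h1 (le_iSup_of_le hd le_rfl))

theorem sub_le_omegaTV_add_mul_dTV {P : Set (Measure X)} (hP : ∀ μ ∈ P, IsFiniteMeasure μ)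
    {θ : Measure X → ℝ} (hA : CondA P θ) (hconv : ConvexMeasureSet P)
    (hlin : LinearFunctional P θ) {ε : ℝ} (hε : 0 < ε) {P0 P1 : Measure X} (h0 : P0 ∈ P)
    (h1 : P1 ∈ P) :
    θ P0 - θ P1 ≤ (omegaTV P θ ε).toReal + (omegaTV P θ ε).toReal / ε * dTV P0 P1 := by
  have hω : 0 ≤ (omegaTV P θ ε).toReal := toReal_nonneg
  obtain hd | hd := le_or_gt (dTV P0 P1) ε
  · have := (le_abs_self _).trans (abs_sub_le_toReal_omegaTV hA h0 h1 hd)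
    have := mul_nonneg (div_nonneg hω hε.le) (dTV_nonneg P0 P1)
    linarith
  -- shrink the segment from `P1` to `P0` to total variation length exactly `ε`
  have := hP P0 h0
  have := hP P1 h1
  have hd_pos : 0 < dTV P0 P1 := hε.trans hd
  have hlam : 0 ≤ ε / dTV P0 P1 := by positivity
  have hlam' : ε / dTV P0 P1 ≤ 1 := (div_le_one hd_pos).2 hd.le
  have hmix : dTV (mix (ε / dTV P0 P1) P0 P1) P1 ≤ ε := by
    rw [dTV_mix_left hlam hlam', div_mul_cancel₀ _ hd_pos.ne']
  have hle := (le_abs_self _).trans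
    (abs_sub_le_toReal_omegaTV hA (hconv P0 h0 P1 h1 _ hlam hlam') h1 hmix)
  rw [hlin P0 h0 P1 h1 _ hlam hlam'] at hle
  calc θ P0 - θ P1 = ε / dTV P0 P1 * (θ P0 - θ P1) / ε * dTV P0 P1 := by field_simp
    _ ≤ (omegaTV P θ ε).toReal / ε * dTV P0 P1 := by gcongr; linarith
    _ ≤ _ := le_add_of_nonneg_left hω

/-- The density of `μ` with respect to `ν`, as an element of `L¹(ν)`. For `μ ≪ ν`, total variation
is bounded by the distance of densities, and integrals of bounded functions against `μ` are values
of continuous linear functionals. -/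
noncomputable def l1Density (ν μ : Measure X) [IsFiniteMeasure μ] : Lp ℝ 1 ν :=
  (Measure.integrable_toReal_rnDeriv (μ := μ) (ν := ν)).toL1 _

theorem coeFn_l1Density {ν : Measure X} (μ : Measure X) [IsFiniteMeasure μ] :
    l1Density ν μ =ᵐ[ν] fun x => (μ.rnDeriv ν x).toReal :=
  Integrable.coeFn_toL1 _

section L1Density

variable {ν : Measure X} [SigmaFinite ν]

theorem l1Density_mix {lam : ℝ} (h0 : 0 ≤ lam) (h1 : lam ≤ 1) (P0 P1 : Measure X)
    [IsFiniteMeasure P0] [IsFiniteMeasure P1] :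
    l1Density ν (mix lam P0 P1) = lam • l1Density ν P0 + (1 - lam) • l1Density ν P1 := by
  have := P0.smul_finite (ofReal_ne_top (r := lam))
  have := P1.smul_finite (ofReal_ne_top (r := 1 - lam))
  refine Lp.ext ?_
  filter_upwards [coeFn_l1Density (ν := ν) (mix lam P0 P1), coeFn_l1Density (ν := ν) P0,
    coeFn_l1Density (ν := ν) P1,
    Measure.rnDeriv_add (ENNReal.ofReal lam • P0) (ENNReal.ofReal (1 - lam) • P1) ν,
    Measure.rnDeriv_smul_left_of_ne_top P0 ν (ofReal_ne_top (r := lam)),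
    Measure.rnDeriv_smul_left_of_ne_top P1 ν (ofReal_ne_top (r := 1 - lam)),
    P0.rnDeriv_lt_top ν, P1.rnDeriv_lt_top ν,
    Lp.coeFn_add (lam • l1Density ν P0) ((1 - lam) • l1Density ν P1),
    Lp.coeFn_smul lam (l1Density ν P0), Lp.coeFn_smul (1 - lam) (l1Density ν P1)]
    with x hmix hP0 hP1 hadd hsmul0 hsmul1 hfin0 hfin1 hadd' hsmul0' hsmul1'
  rw [hmix, mix, hadd, Pi.add_apply, hsmul0, hsmul1, hadd', Pi.add_apply, hsmul0', hsmul1']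
  simp only [Pi.smul_apply, smul_eq_mul, hP0, hP1]
  rw [toReal_add (by finiteness) (by finiteness), toReal_mul, toReal_mul, toReal_ofReal h0,
    toReal_ofReal (sub_nonneg.2 h1)]

theorem setIntegral_l1Density {μ : Measure X} [IsFiniteMeasure μ] (hμ : μ ≪ ν) (A : Set X) :
    ∫ x in A, l1Density ν μ x ∂ν = μ.real A := by
  rw [← Measure.setIntegral_toReal_rnDeriv hμ]
  exact integral_congr_ae (ae_restrict_of_ae (coeFn_l1Density μ))

theorem integral_mul_l1Density {μ : Measure X} [IsFiniteMeasure μ] (hμ : μ ≪ ν) (h : X → ℝ) :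
    ∫ x, h x * l1Density ν μ x ∂ν = ∫ x, h x ∂μ := by
  rw [← integral_toReal_rnDeriv_mul hμ]
  refine integral_congr_ae ?_
  filter_upwards [coeFn_l1Density (ν := ν) μ] with x hx
  rw [hx, mul_comm]

theorem dTV_le_norm_l1Density_sub {P0 P1 : Measure X} [IsFiniteMeasure P0] [IsFiniteMeasure P1]
    (h0 : P0 ≪ ν) (h1 : P1 ≪ ν) : dTV P0 P1 ≤ ‖l1Density ν P0 - l1Density ν P1‖ := by
  refine Real.iSup_le (fun A => ?_) (norm_nonneg _)
  rw [← measureReal_def, ← measureReal_def, ← setIntegral_l1Density h0, ← setIntegral_l1Density h1,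
    ← integral_sub (L1.integrable_coeFn _).integrableOn (L1.integrable_coeFn _).integrableOn,
    ← Real.norm_eq_abs, L1.norm_eq_integral_norm]
  calc ‖∫ x in A, (l1Density ν P0 x - l1Density ν P1 x) ∂ν‖
      ≤ ∫ x in A, ‖l1Density ν P0 x - l1Density ν P1 x‖ ∂ν := norm_integral_le_integral_norm _
    _ ≤ ∫ x, ‖l1Density ν P0 x - l1Density ν P1 x‖ ∂ν :=
        setIntegral_le_integral ((L1.integrable_coeFn _).sub (L1.integrable_coeFn _)).norm
          (ae_of_all _ fun _ => norm_nonneg _)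
    _ = ∫ x, ‖(l1Density ν P0 - l1Density ν P1) x‖ ∂ν := by
        refine integral_congr_ae ?_
        filter_upwards [Lp.coeFn_sub (l1Density ν P0) (l1Density ν P1)] with x hx
        rw [hx, Pi.sub_apply]

end L1Density

theorem exists_abs_sub_le_half {ι : Type*} {D : ι → ℝ} {W : ℝ} (hD : ∀ i j, D i - D j ≤ W) :
    ∃ b, ∀ i, |b - D i| ≤ W / 2 := by
  obtain hι | hι := isEmpty_or_nonempty ι
  · exact ⟨0, hι.elim⟩
  have hbdd : BddAbove (Set.range D) := by
    obtain ⟨j⟩ := hι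
    refine ⟨D j + W, ?_⟩
    rintro _ ⟨i, rfl⟩
    linarith [hD i j]
  refine ⟨(⨆ i, D i) - W / 2, fun i => ?_⟩
  have := le_ciSup hbdd i
  have : ⨆ j, D j ≤ D i + W := ciSup_le fun j => by linarith [hD j i]
  rw [abs_le]
  constructor <;> linarith

theorem convex_range_l1Density_sub {ν : Measure X} [SigmaFinite ν] {P : Set (Measure X)}
    [hP : ∀ μ : P, IsFiniteMeasure (μ : Measure X)] {θ : Measure X → ℝ}
    (hconv : ConvexMeasureSet P) (hlin : LinearFunctional P θ) (W : ℝ) :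
    Convex ℝ (Set.range fun p : P × P =>
      (l1Density ν (p.1 : Measure X) - l1Density ν p.2, θ p.1 - θ p.2 - W)) := by
  rintro _ ⟨⟨P0, P1⟩, rfl⟩ _ ⟨⟨Q0, Q1⟩, rfl⟩ s t hs ht hst
  obtain rfl : t = 1 - s := by linarith
  have hs1 : s ≤ 1 := by linarith
  refine ⟨(⟨mix s P0 Q0, hconv _ P0.2 _ Q0.2 s hs hs1⟩,
    ⟨mix s P1 Q1, hconv _ P1.2 _ Q1.2 s hs hs1⟩), ?_⟩
  simp only [Prod.smul_mk, Prod.mk_add_mk, Prod.mk.injEq, smul_eq_mul]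
  constructor
  · rw [l1Density_mix hs hs1, l1Density_mix hs hs1]
    module
  · rw [hlin _ P0.2 _ Q0.2 s hs hs1, hlin _ P1.2 _ Q1.2 s hs hs1]
    ring

theorem exists_integral_add_const_approx {P : Set (Measure X)}
    (hP : ∀ μ ∈ P, IsFiniteMeasure μ) {θ : Measure X → ℝ} (hconv : ConvexMeasureSet P)
    (hdom : Dominated P) (hlin : LinearFunctional P θ) {W c : ℝ} (hc : 0 ≤ c)
    (hθ : ∀ P0 ∈ P, ∀ P1 ∈ P, θ P0 - θ P1 ≤ W + c * dTV P0 P1) :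
    ∃ (h : X → ℝ) (b : ℝ), Measurable h ∧ (∀ x, |h x| ≤ 1) ∧
      ∀ μ ∈ P, |b + c * ∫ x, h x ∂μ - θ μ| ≤ W / 2 := by
  obtain ⟨ν', hν', hac'⟩ := hdom
  have hac (μ : P) : (μ : Measure X) ≪ ν'.toFinite :=
    (hac' μ μ.2).trans (absolutelyContinuous_toFinite ν')
  have (μ : P) : IsFiniteMeasure (μ : Measure X) := hP μ μ.2
  obtain ⟨F, hFc, hFθ⟩ := exists_clm_between_of_convex hc
    (convex_range_l1Density_sub (ν := ν'.toFinite) hconv hlin W) <| by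
      rintro _ ⟨⟨P0, P1⟩, rfl⟩
      have := mul_le_mul_of_nonneg_left (dTV_le_norm_l1Density_sub (hac P0) (hac P1)) hc
      linarith [hθ P0 P0.2 P1 P1.2]
  have hF_norm : ‖F‖ ≤ c := F.opNorm_le_bound hc fun v =>
    abs_le.2 ⟨by simpa [neg_le] using hFc (-v), hFc v⟩
  obtain ⟨h, hh_meas, hh_le, hFh⟩ := exists_measurable_bounded_eq_integral_mul F
  have hFd (μ : P) : F (l1Density ν'.toFinite μ) = ∫ x, h x ∂(μ : Measure X) := by
    rw [hFh, integral_mul_l1Density (hac μ)]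
  obtain ⟨b, hb⟩ := exists_abs_sub_le_half (D := fun μ : P => θ μ - ∫ x, h x ∂(μ : Measure X))
    (W := W) fun P0 P1 => by
      have := hFθ _ ⟨(P0, P1), rfl⟩
      rw [map_sub, hFd, hFd] at this
      linarith
  refine ⟨fun x => h x / c, b, hh_meas.div_const c, fun x => ?_, fun μ hμ => ?_⟩
  · rw [abs_div, abs_of_nonneg hc]
    exact div_le_one_of_le₀ ((hh_le x).trans hF_norm) hc
  · have hc_div (x : X) : c * (h x / c) = h x := mul_div_cancel_of_imp' fun hc0 =>
      abs_nonpos_iff.1 (((hh_le x).trans hF_norm).trans_eq hc0)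
    simp_rw [← integral_const_mul, hc_div]
    convert hb ⟨μ, hμ⟩ using 2
    ring

theorem lintegral_pi_snoc {n : ℕ} (μ : Fin (n + 1) → Measure Z) [∀ i, SigmaFinite (μ i)]
    {g : (Fin (n + 1) → Z) → ℝ≥0∞} (hg : Measurable g) :
    ∫⁻ z, g z ∂Measure.pi μ =
      ∫⁻ zpre, ∫⁻ zn, g (Fin.snoc (α := fun _ => Z) zpre zn) ∂μ (Fin.last n)
        ∂Measure.pi fun i : Fin n => μ i.castSucc := by
  rw [← (measurePreserving_piFinSuccAbove μ (Fin.last n)).symm.lintegral_comp hg,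
    lintegral_prod_symm]
  · simp [MeasurableEquiv.piFinSuccAbove_symm_apply, Fin.insertNthEquiv, Fin.insertNth_last']
  · exact (hg.comp (MeasurableEquiv.measurable _)).aemeasurable

theorem measurable_snoc (n : ℕ) :
    Measurable fun p : (Fin n → Z) × Z => (Fin.snoc (α := fun _ => Z) p.1 p.2 : Fin (n + 1) → Z) :=
  measurable_pi_iff.2 <| Fin.lastCases (by simpa using measurable_snd) fun i => by
    simpa only [Fin.snoc_castSucc] using measurable_fst.eval (a := i)

theorem seqIntegral_eq_lintegral_pi {T : Type*} {κ : T → Measure Z}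
    [∀ t, IsProbabilityMeasure (κ t)] {n : ℕ} (x : Fin n → T) {g : (Fin n → Z) → ℝ≥0∞}
    (hg : Measurable g) :
    seqIntegral (fun _ p => κ p.1) n x g = ∫⁻ z, g z ∂Measure.pi fun i => κ (x i) := by
  induction n with
  | zero =>
    rw [seqIntegral, lintegral_unique, measure_univ, mul_one]
    exact congrArg g (Subsingleton.elim _ _)
  | succ n ih =>
    rw [seqIntegral, lintegral_pi_snoc _ hg]
    exact ih _ (Measurable.lintegral_prod_right' (ν := κ (x (Fin.last n)))
      (f := fun p : (Fin n → Z) × Z => g (Fin.snoc (α := fun _ => Z) p.1 p.2))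
      (hg.comp (measurable_snoc n)))

/-- `α`-differential privacy of a single-observation channel. -/
def IsLocallyPrivate (α : ℝ) (κ : Kernel X Z) : Prop :=
  ∀ (x x' : X) (A : Set Z), MeasurableSet A → κ x A ≤ ENNReal.ofReal (Real.exp α) * κ x' A

/-- The non-interactive channel that privatizes each of `n` observations independently by `κ`. -/
noncomputable def piKernel (n : ℕ) (κ : Kernel X Z) [IsMarkovKernel κ] :
    Kernel (Fin n → X) (Fin n → Z) where
  toFun x := Measure.pi fun i => κ (x i)
  measurable' := by
    refine Measurable.measure_of_isPiSystem_of_isProbabilityMeasure generateFrom_pi.symm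
      isPiSystem_pi ?_
    rintro _ ⟨A, hA, rfl⟩
    simp only [Measure.pi_pi]
    exact Finset.measurable_prod _ fun i _ =>
      (κ.measurable_coe (hA i (Set.mem_univ i))).comp (measurable_pi_apply i)

theorem piKernel_apply (n : ℕ) (κ : Kernel X Z) [IsMarkovKernel κ] (x : Fin n → X) :
    piKernel n κ x = Measure.pi fun i => κ (x i) :=
  rfl

instance isMarkovKernel_piKernel (n : ℕ) (κ : Kernel X Z) [IsMarkovKernel κ] :
    IsMarkovKernel (piKernel n κ) :=
  ⟨fun x => by rw [piKernel_apply]; infer_instance⟩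

theorem IsLocallyPrivate.isSeqInteractive_piKernel {α : ℝ} {κ : Kernel X Z} [IsMarkovKernel κ]
    (hκ : IsLocallyPrivate α κ) (n : ℕ) : IsSeqInteractive n α (piKernel n κ) := by
  refine ⟨fun _ => κ.comap Prod.fst measurable_fst, fun _ => inferInstance,
    fun _ x x' _ A hA => hκ x x' A hA, fun x A hA => ?_⟩
  simp only [Kernel.comap_apply]
  have hseq := seqIntegral_eq_lintegral_pi (κ := κ) x (measurable_one.indicator hA)
  rw [lintegral_indicator_one hA] at hseq
  exact hseq.symm

theorem privProd_piKernel (n : ℕ) (κ : Kernel X Z) [IsMarkovKernel κ] (μ : Measure X)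
    [IsProbabilityMeasure μ] :
    privProd n (piKernel n κ) μ = Measure.pi fun _ => μ.bind κ := by
  refine (Measure.pi_eq fun A hA => ?_).symm
  have hindep : iIndepFun (fun i (x : Fin n → X) => κ (x i) (A i)) (Measure.pi fun _ => μ) :=
    iIndepFun_pi fun i => (κ.measurable_coe (hA i)).aemeasurable
  rw [privProd, Measure.bind_apply (MeasurableSet.univ_pi hA) (piKernel n κ).aemeasurable]
  simp only [piKernel_apply, Measure.pi_pi]
  rw [lintegral_prod_eq_prod_lintegral_of_indepFun Finset.univ _ hindep
    fun i => (κ.measurable_coe (hA i)).comp (measurable_pi_apply i)]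
  refine Finset.prod_congr rfl fun i _ => ?_
  rw [Measure.bind_apply (hA i) κ.aemeasurable]
  exact ((measurePreserving_eval (fun _ => μ) i).lintegral_comp (κ.measurable_coe (hA i)))

theorem minimaxRisk_congr {l : ℝ → ℝ} {P : Set (Measure X)} {θ : Measure X → ℝ}
    {QPn QPn' : Measure X → Measure Z} (h : ∀ μ ∈ P, QPn μ = QPn' μ) :
    minimaxRisk l QPn P θ = minimaxRisk l QPn' P θ := by
  exact iInf_congr fun est => iInf_congr fun _ => biSup_congr fun μ hμ => by rw [h μ hμ]

theorem minimaxRisk_le {l : ℝ → ℝ} {P : Set (Measure X)} {θ : Measure X → ℝ}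
    {QPn : Measure X → Measure Z} {est : Z → ℝ} (hest : Measurable est) {R : ℝ≥0∞}
    (hR : ∀ μ ∈ P, ∫⁻ z, ENNReal.ofReal (l |est z - θ μ|) ∂QPn μ ≤ R) :
    minimaxRisk l QPn P θ ≤ R :=
  iInf₂_le_of_le est hest (iSup₂_le hR)

theorem privMinimaxRisk_le_minimaxRisk_pi {α : ℝ} {q : ℕ} {κ : Kernel X (Fin q → ℝ)}
    [IsMarkovKernel κ] (hκ : IsLocallyPrivate α κ) (n : ℕ) (l : ℝ → ℝ) {P : Set (Measure X)}
    (hP : ∀ μ ∈ P, IsProbabilityMeasure μ) (θ : Measure X → ℝ) :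
    privMinimaxRisk n α l P θ ≤
      minimaxRisk l (fun μ => Measure.pi fun _ : Fin n => μ.bind κ) P θ := by
  have hprod : ∀ μ ∈ P, privProd n (piKernel n κ) μ = Measure.pi fun _ => μ.bind κ := by
    intro μ hμ
    have := hP μ hμ
    exact privProd_piKernel n κ μ
  rw [← minimaxRisk_congr hprod]
  exact iInf_le_of_le q <| iInf₂_le_of_le (piKernel n κ) inferInstance <|
    iInf_le_of_le (hκ.isSeqInteractive_piKernel n) le_rfl

section BiasedSign

/-- The law of a random sign, `1` with probability `(1 + p) / 2` and `-1` with probability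
`(1 - p) / 2`, so that its mean is `p`; it lives on `Fin 1 → ℝ` because `privMinimaxRisk` asks for
outputs in some `ℝ^q`. -/
noncomputable def biasedSign (p : ℝ) : Measure (Fin 1 → ℝ) :=
  ENNReal.ofReal ((1 + p) / 2) • Measure.dirac 1 + ENNReal.ofReal ((1 - p) / 2) • Measure.dirac (-1)

theorem biasedSign_apply (p : ℝ) (A : Set (Fin 1 → ℝ)) :
    biasedSign p A = ENNReal.ofReal ((1 + p) / 2) * Measure.dirac 1 A +
      ENNReal.ofReal ((1 - p) / 2) * Measure.dirac (-1) A :=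
  rfl

theorem isProbabilityMeasure_biasedSign {p : ℝ} (hp : |p| ≤ 1) :
    IsProbabilityMeasure (biasedSign p) := by
  obtain ⟨h₁, h₂⟩ := abs_le.1 hp
  constructor
  rw [biasedSign_apply, measure_univ, measure_univ, mul_one, mul_one,
    ← ofReal_add (by linarith) (by linarith), ← add_div]
  norm_num

/-- The channel answering `x` with a random sign of mean `h x`. -/
noncomputable def biasedSignKernel (h : X → ℝ) (hh : Measurable h) : Kernel X (Fin 1 → ℝ) where
  toFun x := biasedSign (h x)
  measurable' := by
    refine Measure.measurable_of_measurable_coe _ fun A _ => ?_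
    simp only [biasedSign_apply]
    fun_prop

variable {h : X → ℝ}

theorem biasedSignKernel_apply (hh : Measurable h) (x : X) :
    biasedSignKernel h hh x = biasedSign (h x) :=
  rfl

theorem isMarkovKernel_biasedSignKernel (hh : Measurable h) (h1 : ∀ x, |h x| ≤ 1) :
    IsMarkovKernel (biasedSignKernel h hh) :=
  ⟨fun x => isProbabilityMeasure_biasedSign (h1 x)⟩

theorem isLocallyPrivate_biasedSignKernel (hh : Measurable h) {r α : ℝ} (hr : ∀ x, |h x| ≤ r)
    (hα : 1 + r ≤ Real.exp α * (1 - r)) : IsLocallyPrivate α (biasedSignKernel h hh) := by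
  have hratio {s t : ℝ} (hs : s ≤ r) (ht : -r ≤ t) :
      ENNReal.ofReal ((1 + s) / 2) ≤
        ENNReal.ofReal (Real.exp α) * ENNReal.ofReal ((1 + t) / 2) := by
    rw [← ofReal_mul (Real.exp_pos α).le]
    refine ofReal_le_ofReal ?_
    have := mul_le_mul_of_nonneg_left ht (Real.exp_pos α).le
    linarith
  intro x x' A _
  obtain ⟨hx, hx₂⟩ := abs_le.1 (hr x)
  obtain ⟨hx', hx₂'⟩ := abs_le.1 (hr x')
  simp only [biasedSignKernel_apply, biasedSign_apply]
  rw [mul_add, ← mul_assoc, ← mul_assoc]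
  gcongr
  · exact hratio hx₂ hx'
  · simpa only [sub_eq_add_neg] using hratio (neg_le.1 hx) (neg_le_neg hx₂')

theorem bind_biasedSignKernel (hh : Measurable h) (h1 : ∀ x, |h x| ≤ 1) (μ : Measure X)
    [IsProbabilityMeasure μ] :
    μ.bind (biasedSignKernel h hh) = biasedSign (∫ x, h x ∂μ) := by
  have hint : Integrable h μ := .of_bound hh.aestronglyMeasurable 1 (ae_of_all _ h1)
  have hplus : ∫⁻ x, ENNReal.ofReal ((1 + h x) / 2) ∂μ =
      ENNReal.ofReal ((1 + ∫ x, h x ∂μ) / 2) := by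
    rw [← ofReal_integral_eq_lintegral_ofReal, integral_div, integral_add (integrable_const 1) hint]
    · simp
    · exact ((integrable_const 1).add hint).div_const 2
    · exact ae_of_all _ fun x => div_nonneg (neg_le_iff_add_nonneg'.1 (neg_le_of_abs_le (h1 x)))
        two_pos.le
  have hminus : ∫⁻ x, ENNReal.ofReal ((1 - h x) / 2) ∂μ =
      ENNReal.ofReal ((1 - ∫ x, h x ∂μ) / 2) := by
    rw [← ofReal_integral_eq_lintegral_ofReal, integral_div, integral_sub (integrable_const 1) hint]
    · simp
    · exact ((integrable_const 1).sub hint).div_const 2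
    · exact ae_of_all _ fun x => div_nonneg (sub_nonneg.2 (le_of_abs_le (h1 x))) two_pos.le
  ext A hA
  rw [Measure.bind_apply hA (biasedSignKernel h hh).aemeasurable]
  simp only [biasedSignKernel_apply, biasedSign_apply]
  rw [lintegral_add_left (by fun_prop), lintegral_mul_const _ (by fun_prop),
    lintegral_mul_const _ (by fun_prop), hplus, hminus]

end BiasedSign

theorem lintegral_exp_abs_mul_le {μ : Measure Ω} {Y : Ω → ℝ} {v : NNReal}
    (hY : HasSubgaussianMGF Y v μ) (t : ℝ) :
    ∫⁻ ω, ENNReal.ofReal (Real.exp |t * Y ω|) ∂μ ≤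
      ENNReal.ofReal (2 * Real.exp (v * t ^ 2 / 2)) := by
  have hint := (hY.integrable_exp_mul t).add (hY.integrable_exp_mul (-t))
  calc ∫⁻ ω, ENNReal.ofReal (Real.exp |t * Y ω|) ∂μ
      ≤ ∫⁻ ω, ENNReal.ofReal (Real.exp (t * Y ω) + Real.exp (-t * Y ω)) ∂μ :=
        lintegral_mono fun ω => ofReal_le_ofReal <| by
          simpa only [neg_mul] using Real.exp_abs_le (t * Y ω)
    _ = ENNReal.ofReal (mgf Y μ t + mgf Y μ (-t)) := by
        rw [mgf, mgf, ← integral_add (hY.integrable_exp_mul t) (hY.integrable_exp_mul (-t))]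
        exact (ofReal_integral_eq_lintegral_ofReal hint <| ae_of_all _ fun ω =>
          add_nonneg (Real.exp_nonneg _) (Real.exp_nonneg _)).symm
    _ ≤ ENNReal.ofReal (2 * Real.exp (v * t ^ 2 / 2)) := by
        have := hY.mgf_le t
        have := hY.mgf_le (-t)
        rw [neg_sq] at this
        exact ofReal_le_ofReal (by linarith)

theorem hasSubgaussianMGF_sum_pi {μ : Measure Ω} [IsProbabilityMeasure μ] {Y : Ω → ℝ} {v : NNReal}
    (hY : HasSubgaussianMGF Y v μ) (n : ℕ) :
    HasSubgaussianMGF (fun z : Fin n → Ω => ∑ i, Y (z i)) (n * v) (Measure.pi fun _ => μ) := by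
  have hmarginal (i : Fin n) :
      HasSubgaussianMGF (fun z : Fin n → Ω => Y (z i)) v (Measure.pi fun _ => μ) :=
    .of_map (measurable_pi_apply i).aemeasurable <| by
      rwa [(measurePreserving_eval (fun _ => μ) i).map_eq]
  simpa using HasSubgaussianMGF.sum_of_iIndepFun (iIndepFun_pi fun _ => hY.aemeasurable)
    (s := Finset.univ) fun i _ => hmarginal i

theorem integral_biasedSign {p : ℝ} (hp : |p| ≤ 1) : ∫ z, z 0 ∂biasedSign p = p := by
  obtain ⟨h₁, h₂⟩ := abs_le.1 hp
  have hdirac (c : ℝ) (z : Fin 1 → ℝ) :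
      Integrable (fun z : Fin 1 → ℝ => z 0) (ENNReal.ofReal c • Measure.dirac z) :=
    (integrable_dirac (by simp)).smul_measure ofReal_ne_top
  rw [biasedSign, integral_add_measure (hdirac _ _) (hdirac _ _), integral_smul_measure,
    integral_smul_measure, integral_dirac, integral_dirac, toReal_ofReal (by linarith),
    toReal_ofReal (by linarith)]
  simp only [Pi.one_apply, Pi.neg_apply, smul_eq_mul]
  ring

theorem hasSubgaussianMGF_biasedSign {p : ℝ} (hp : |p| ≤ 1) :
    HasSubgaussianMGF (fun z : Fin 1 → ℝ => z 0 - p) 1 (biasedSign p) := by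
  have := isProbabilityMeasure_biasedSign hp
  have hmem : ∀ᵐ z ∂biasedSign p, z 0 ∈ Set.Icc (-1 : ℝ) 1 := by
    rw [biasedSign, ae_add_measure_iff]
    constructor <;> refine Measure.ae_smul_measure ?_ _ <;>
      rw [ae_dirac_iff ((measurable_pi_apply 0) measurableSet_Icc)] <;> simp
  have hoeffding := hasSubgaussianMGF_of_mem_Icc (measurable_pi_apply 0).aemeasurable hmem
  have hparam : (‖(1 : ℝ) - -1‖₊ / 2) ^ 2 = 1 := by
    rw [sub_neg_eq_add, one_add_one_eq_two, Real.nnnorm_two, div_self two_ne_zero, one_pow]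
  rwa [hparam, integral_biasedSign hp] at hoeffding

theorem add_one_le_three_halves_pow_ceil {s : ℝ} (hs : 0 ≤ s) :
    s + 1 ≤ (3 / 2) ^ ⌈2 * Real.log (√s + 1) / Real.log (3 / 2)⌉₊ := by
  have hlog : 0 < Real.log (3 / 2) := Real.log_pos (by norm_num)
  have hsqrt := Real.sqrt_nonneg s
  calc s + 1 ≤ (√s + 1) ^ 2 := by nlinarith [Real.sq_sqrt hs]
    _ ≤ (3 / 2) ^ ⌈2 * Real.log (√s + 1) / Real.log (3 / 2)⌉₊ := by
      rw [← Real.log_le_log_iff (by positivity) (by positivity), Real.log_pow, Real.log_pow,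
        ← div_le_iff₀ hlog]
      exact_mod_cast Nat.le_ceil _

section LossGrowth

variable {l : ℝ → ℝ} {a : ℝ}

theorem CondB.apply_pow_mul_le (hB : CondB l a) (ha : 0 ≤ a) {u : ℝ} (hu : 0 ≤ u) (k : ℕ) :
    l ((3 / 2) ^ k * u) ≤ a ^ k * l u := by
  induction k with
  | zero => simp
  | succ k ih =>
    calc l ((3 / 2) ^ (k + 1) * u) = l (3 / 2 * ((3 / 2) ^ k * u)) := by ring_nf
      _ ≤ a * l ((3 / 2) ^ k * u) := hB.2.2.2 _ (by positivity)
      _ ≤ a * (a ^ k * l u) := by gcongr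
      _ = a ^ (k + 1) * l u := by ring

theorem CondB.apply_half_add_mul_le (hB : CondB l a) (ha : 1 < a) {M : ℕ}
    (hM : 2 * Real.log (2 * a) + 1 ≤ (3 / 2) ^ M) {u T : ℝ} (hu : 0 ≤ u) (hT : 0 ≤ T) :
    l ((1 / 2 + T) * u) ≤ a ^ (M + 1) * Real.exp T * l u := by
  have hlog : 0 < Real.log (2 * a) := Real.log_pos (by linarith)
  -- every `log (2 * a)` in `T` pays for one step `3 / 2`: the factor `a` is absorbed by `exp T`
  set j := ⌊T / Real.log (2 * a)⌋₊
  have hj : j * Real.log (2 * a) ≤ T := (le_div_iff₀ hlog).1 (Nat.floor_le (by positivity))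
  have hj' : T < (j + 1) * Real.log (2 * a) := (div_lt_iff₀ hlog).1 (Nat.lt_floor_add_one _)
  have hscale : 1 / 2 + T ≤ (3 / 2) ^ (M + 1 + j) := by
    have bernoulli : 1 + (j + 1 : ℕ) * (1 / 2 : ℝ) ≤ (1 + 1 / 2) ^ (j + 1) :=
      one_add_mul_le_pow (by norm_num) _
    push_cast at bernoulli
    calc 1 / 2 + T ≤ (2 * Real.log (2 * a) + 1) * (1 + (j + 1) * (1 / 2)) := by nlinarith
      _ ≤ (3 / 2) ^ M * (3 / 2) ^ (j + 1) := by
        rw [show (1 : ℝ) + 1 / 2 = 3 / 2 by norm_num] at bernoulli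
        gcongr
      _ = (3 / 2) ^ (M + 1 + j) := by ring
  have hpow : a ^ j ≤ Real.exp T := by
    calc a ^ j ≤ (2 * a) ^ j := by gcongr; linarith
      _ = Real.exp (j * Real.log (2 * a)) := by rw [Real.exp_nat_mul, Real.exp_log (by linarith)]
      _ ≤ Real.exp T := Real.exp_le_exp.2 hj
  have hlu : 0 ≤ l u := hB.2.1 u hu
  calc l ((1 / 2 + T) * u) ≤ l ((3 / 2) ^ (M + 1 + j) * u) := hB.1 _ _ (by positivity) (by gcongr)
    _ ≤ a ^ (M + 1 + j) * l u := hB.apply_pow_mul_le (by linarith) hu _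
    _ = a ^ (M + 1) * a ^ j * l u := by rw [pow_add]
    _ ≤ a ^ (M + 1) * Real.exp T * l u := by gcongr

theorem CondB.apply_half_add_mul_le_zpow_ceil (hB : CondB l a) (ha : 1 < a) {u T : ℝ}
    (hu : 0 ≤ u) (hT : 0 ≤ T) :
    l ((1 / 2 + T) * u) ≤
      a ^ (⌈2 * Real.log (√(2 * Real.log (2 * a)) + 1) / Real.log (3 / 2)⌉ + 1) *
        Real.exp T * l u := by
  have hlog : 0 ≤ 2 * Real.log (2 * a) := mul_nonneg two_pos.le (Real.log_nonneg (by linarith))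
  have hexponent : 0 ≤ 2 * Real.log (√(2 * Real.log (2 * a)) + 1) / Real.log (3 / 2) :=
    div_nonneg (mul_nonneg two_pos.le (Real.log_nonneg (by simp))) (Real.log_nonneg (by norm_num))
  rw [← Int.natCast_ceil_eq_ceil hexponent]
  exact_mod_cast hB.apply_half_add_mul_le ha (add_one_le_three_halves_pow_ceil hlog) hu hT

end LossGrowth

theorem abs_affine_sum_sub_le {n : ℕ} (hn : 0 < n) {W b p t : ℝ}
    (hbias : |b + W * √n / 4 * p - t| ≤ W / 2) (x : Fin n → ℝ) :
    |b + W / (4 * √n) * ∑ i, x i - t| ≤ (1 / 2 + |1 / (4 * √n) * ∑ i, (x i - p)|) * W := by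
  have hW : 0 ≤ W := by linarith [(abs_nonneg _).trans hbias]
  have hsum : ∑ i, (x i - p) = ∑ i, x i - √n * √n * p := by simp [Finset.sum_sub_distrib]
  calc |b + W / (4 * √n) * ∑ i, x i - t|
      = |(b + W * √n / 4 * p - t) + 1 / (4 * √n) * (∑ i, (x i - p)) * W| := by
        rw [hsum]
        field_simp
        ring_nf
    _ ≤ W / 2 + |1 / (4 * √n) * ∑ i, (x i - p)| * W := by
        refine (abs_add_le _ _).trans (add_le_add hbias ?_)
        rw [abs_mul _ W, abs_of_nonneg hW]
    _ = (1 / 2 + |1 / (4 * √n) * ∑ i, (x i - p)|) * W := by ring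

theorem lintegral_loss_sum_biasedSign_le {p : ℝ} (hp : |p| ≤ 1) {n : ℕ} (hn : 0 < n) {l : ℝ → ℝ}
    (hl : MonotoneOn l (Set.Ici 0)) {W K b t : ℝ} (hK : 0 ≤ K)
    (hlK : ∀ T, 0 ≤ T → l ((1 / 2 + T) * W) ≤ K * Real.exp T)
    (hbias : |b + W * √n / 4 * p - t| ≤ W / 2) :
    ∫⁻ z, ENNReal.ofReal (l |b + W / (4 * √n) * ∑ i, z i 0 - t|)
        ∂Measure.pi (fun _ : Fin n => biasedSign p) ≤
      ENNReal.ofReal (2 * Real.exp (1 / 32) * K) := by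
  have := isProbabilityMeasure_biasedSign hp
  have hn' : (0 : ℝ) < n := Nat.cast_pos.2 hn
  have hloss (z : Fin n → Fin 1 → ℝ) : l |b + W / (4 * √n) * ∑ i, z i 0 - t| ≤
      K * Real.exp |1 / (4 * √n) * ∑ i, (z i 0 - p)| := by
    have hdev := abs_affine_sum_sub_le hn hbias fun i => z i 0
    have hdev_nonneg := abs_nonneg (b + W / (4 * √n) * ∑ i, z i 0 - t)
    exact (hl hdev_nonneg (hdev_nonneg.trans hdev) hdev).trans (hlK _ (abs_nonneg _))
  have hsubG := hasSubgaussianMGF_sum_pi (hasSubgaussianMGF_biasedSign hp) n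
  have hparam : (n * 1 : NNReal) * (1 / (4 * √n)) ^ 2 / 2 = (1 / 32 : ℝ) := by
    rw [div_pow, mul_pow, Real.sq_sqrt hn'.le]
    push_cast
    field_simp
    norm_num
  calc ∫⁻ z, ENNReal.ofReal (l |b + W / (4 * √n) * ∑ i, z i 0 - t|)
        ∂Measure.pi (fun _ : Fin n => biasedSign p)
      ≤ ∫⁻ z, ENNReal.ofReal K * ENNReal.ofReal (Real.exp |1 / (4 * √n) * ∑ i, (z i 0 - p)|)
          ∂Measure.pi (fun _ : Fin n => biasedSign p) := lintegral_mono fun z => by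
        rw [← ofReal_mul hK]
        exact ofReal_le_ofReal (hloss z)
    _ ≤ ENNReal.ofReal (2 * Real.exp (1 / 32) * K) := by
        rw [lintegral_const_mul' _ _ ofReal_ne_top, mul_comm, ofReal_mul (by positivity), ← hparam]
        gcongr
        exact lintegral_exp_abs_mul_le hsubG _

theorem eight_le_eight_mul_sq_div {a : ℝ} (ha : 1 / 2 < a) : 8 ≤ 8 * a ^ 2 / (2 * a - 1) := by
  rw [le_div_iff₀ (by linarith)]
  nlinarith [sq_nonneg (a - 1)]

theorem privMinimaxRisk_le_of_loss_growth {α : ℝ} (hα : 0 < α) {n : ℕ} (hn : 0 < n)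
    {P : Set (Measure X)} (hP : ∀ μ ∈ P, IsProbabilityMeasure μ) {θ : Measure X → ℝ}
    (hconv : ConvexMeasureSet P) (hdom : Dominated P) (hlin : LinearFunctional P θ) {l : ℝ → ℝ}
    (hl : MonotoneOn l (Set.Ici 0)) {W K : ℝ} (hW : 0 ≤ W) (hK : 0 ≤ K)
    (hθ : ∀ P0 ∈ P, ∀ P1 ∈ P, θ P0 - θ P1 ≤
      W + W / (4 / √n * ((Real.exp α + 1) / (Real.exp α - 1))) * dTV P0 P1)
    (hlK : ∀ T, 0 ≤ T → l ((1 / 2 + T) * W) ≤ K * Real.exp T) :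
    privMinimaxRisk n α l P θ ≤ ENNReal.ofReal (2 * Real.exp (1 / 32) * K) := by
  have hexp : 0 < Real.exp α - 1 := sub_pos.2 (Real.one_lt_exp_iff.2 hα)
  obtain ⟨h, b, hh, h1, hbias⟩ := exists_integral_add_const_approx
    (fun μ hμ => have := hP μ hμ; inferInstance) hconv hdom hlin (by positivity) hθ
  -- the largest amplitude for which a sign of mean `r * h x` is still `α`-private
  set r := (Real.exp α - 1) / (Real.exp α + 1) with hr_def
  have hr_nonneg : 0 ≤ r := by positivity
  have hr_le : r ≤ 1 := div_le_one_of_le₀ (by linarith) (by positivity)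
  have hr_private : 1 + r ≤ Real.exp α * (1 - r) := by
    rw [hr_def]
    field_simp
    linarith
  have hrh (x : X) : |r * h x| ≤ r := by
    rw [abs_mul, abs_of_nonneg hr_nonneg]
    exact mul_le_of_le_one_right hr_nonneg (h1 x)
  have hrh_meas : Measurable fun x => r * h x := hh.const_mul r
  have hrh_one (x : X) : |r * h x| ≤ 1 := (hrh x).trans hr_le
  have := isMarkovKernel_biasedSignKernel hrh_meas hrh_one
  refine (privMinimaxRisk_le_minimaxRisk_pi
    (isLocallyPrivate_biasedSignKernel hrh_meas hrh hr_private) n l hP θ).trans <|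
    minimaxRisk_le (est := fun z => b + W / (4 * √n) * ∑ i, z i 0) (by fun_prop) fun μ hμ => ?_
  have := hP μ hμ
  have hmean : |∫ x, r * h x ∂μ| ≤ 1 := by
    simpa using norm_integral_le_of_norm_le_const (f := fun x => r * h x) (ae_of_all μ hrh_one)
  simp only [bind_biasedSignKernel hrh_meas hrh_one μ]
  refine lintegral_loss_sum_biasedSign_le hmean hn hl hK hlK ?_
  convert hbias μ hμ using 4
  rw [integral_const_mul, hr_def]
  field_simp

/-- Corollary: attainability of the `α`-private minimax rate.
Under Conditions A and B, with `𝒫` convex and dominated and `θ` linear, the `α`-private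
minimax risk satisfies
`M_{n,α}(𝒫, θ) ≤ C1 · l(ω_TV((4/√n)(e^α+1)/(e^α-1)))`, where
`C1 = (1 + 8a²/(2a-1)) a^{⌈2 log C / log(3/2)⌉ + 1}` and `C = √(2 log 2a) + 1`. -/
theorem statement8 {X : Type*} [MeasurableSpace X] (α : ℝ) (hα : 0 < α) (n : ℕ) (hn : 0 < n)
    (P : Set (Measure X)) (hP : ∀ μ ∈ P, IsProbabilityMeasure μ) (θ : Measure X → ℝ)
    (hA : CondA P θ) (l : ℝ → ℝ) (a : ℝ) (ha : 1 < a) (hB : CondB l a)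
    (hconv : ConvexMeasureSet P) (hdom : Dominated P) (hlin : LinearFunctional P θ) :
    privMinimaxRisk n α l P θ ≤
      ENNReal.ofReal
        (((1 + 8 * a ^ 2 / (2 * a - 1)) *
            a ^ (⌈2 * Real.log (Real.sqrt (2 * Real.log (2 * a)) + 1) /
              Real.log (3 / 2)⌉ + 1)) *
          l ((omegaTV P θ
              (4 / Real.sqrt n * ((Real.exp α + 1) / (Real.exp α - 1)))).toReal)) := by
  set W := (omegaTV P θ (4 / √n * ((Real.exp α + 1) / (Real.exp α - 1)))).toReal
  set A := a ^ (⌈2 * Real.log (√(2 * Real.log (2 * a)) + 1) / Real.log (3 / 2)⌉ + 1)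
  have hε : 0 < 4 / √n * ((Real.exp α + 1) / (Real.exp α - 1)) := by
    have := sub_pos.2 (Real.one_lt_exp_iff.2 hα)
    positivity
  have hmodulus (P0) (h0 : P0 ∈ P) (P1) (h1 : P1 ∈ P) := sub_le_omegaTV_add_mul_dTV
    (fun μ hμ => have := hP μ hμ; inferInstance) hA hconv hlin hε h0 h1
  have hgrowth (T : ℝ) (hT : 0 ≤ T) : l ((1 / 2 + T) * W) ≤ A * l W * Real.exp T :=
    (hB.apply_half_add_mul_le_zpow_ceil ha toReal_nonneg hT).trans_eq (mul_right_comm _ _ _)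
  have hAW : 0 ≤ A * l W := mul_nonneg (by positivity) (hB.2.1 W toReal_nonneg)
  have hconst : 2 * Real.exp (1 / 32) ≤ 1 + 8 * a ^ 2 / (2 * a - 1) := by
    have : Real.exp (1 / 32) ≤ Real.exp 1 := Real.exp_le_exp.2 (by norm_num)
    linarith [Real.exp_one_lt_d9, eight_le_eight_mul_sq_div (a := a) (by linarith)]
  refine (privMinimaxRisk_le_of_loss_growth hα hn hP hconv hdom hlin
    (fun u hu v _ huv => hB.1 u v hu huv) toReal_nonneg hAW hmodulus hgrowth).trans ?_
  exact ofReal_le_ofReal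
    ((mul_le_mul_of_nonneg_right hconst hAW).trans_eq (mul_assoc _ _ _).symm)

end PrivacyPaper
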